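/- arXiv:1806.10976 — 3 statements merged into one kernel-verified Lean document; each statement's English description precedes it below -/
import Mathlib

section
/- Let R ≥ 1 and for each i = 1,…,R let U_i ∈ ℂ^{N_i×K_i} with rows u_{i,1},…,u_{i,N_i}, and let F_i(A) = ∑_{j∈A} ∑_{l∈A} |⟨u_{i,j}, u_{i,l}⟩|² for A ⊆ {1,…,N_i}. Let 𝒩 be the disjoint union of the sets 𝒩_i = {1,…,N_i}, and for S ⊆ 𝒩 write S_i = S ∩ 𝒩_i. Define G(S) = ∏_{i=1}^R F_i(𝒩_i) − ∏_{i=1}^R F_i(𝒩_i ∖ S_i). Then G is normalized (G(∅) = 0) and monotone non-decreasing: G(S) ≤ G(S ∪ {x}) for every S ⊆ 𝒩 and x ∈ 𝒩 ∖ S. -/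
open scoped BigOperators

/-- Per-domain frame potential set function:
`F_i(A) = ∑_{j∈A} ∑_{l∈A} |⟨u_{i,j}, u_{i,l}⟩|²`. -/
noncomputable def frameSetFun {n k : ℕ} (U : Matrix (Fin n) (Fin k) ℂ)
    (A : Finset (Fin n)) : ℝ :=
  ∑ j ∈ A, ∑ l ∈ A, ‖∑ c, star (U j c) * U l c‖ ^ 2

/-- `G(S) = ∏_i F_i(𝒩_i) − ∏_i F_i(𝒩_i ∖ S_i)`, where the ground set `𝒩` is
the disjoint union of the per-domain index sets `𝒩_i` (modeled by a sigma
type) and `S_i` is the part of `S` lying in domain `i`. -/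
noncomputable def G {R : ℕ} {N K : Fin R → ℕ}
    (U : ∀ i, Matrix (Fin (N i)) (Fin (K i)) ℂ)
    (S : Finset (Σ i : Fin R, Fin (N i))) : ℝ :=
  (∏ i, frameSetFun (U i) Finset.univ) -
    ∏ i, frameSetFun (U i)
      (Finset.univ.filter fun j : Fin (N i) => (⟨i, j⟩ : Σ i, Fin (N i)) ∉ S)

theorem frameSetFun_nonneg {n k : ℕ} (U : Matrix (Fin n) (Fin k) ℂ)
    (A : Finset (Fin n)) : 0 ≤ frameSetFun U A :=
  Finset.sum_nonneg fun _ _ => Finset.sum_nonneg fun _ _ => sq_nonneg _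

theorem frameSetFun_mono {n k : ℕ} (U : Matrix (Fin n) (Fin k) ℂ)
    {A B : Finset (Fin n)} (h : A ⊆ B) : frameSetFun U A ≤ frameSetFun U B := by
  unfold frameSetFun
  refine (Finset.sum_le_sum fun j _ =>
    Finset.sum_le_sum_of_subset_of_nonneg h fun _ _ _ => sq_nonneg _).trans ?_
  exact Finset.sum_le_sum_of_subset_of_nonneg h fun _ _ _ =>
    Finset.sum_nonneg fun _ _ => sq_nonneg _

/-- `G` is normalized and monotone non-decreasing. -/
theorem G_normalized_monotone (R : ℕ) (hR : 1 ≤ R) (N K : Fin R → ℕ)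
    (U : ∀ i, Matrix (Fin (N i)) (Fin (K i)) ℂ) :
    G U ∅ = 0 ∧
    (∀ (S : Finset (Σ i : Fin R, Fin (N i))) (x : Σ i : Fin R, Fin (N i)),
      x ∉ S → G U S ≤ G U (insert x S)) := by
  refine ⟨by simp [G], fun S x _ => ?_⟩
  unfold G
  refine sub_le_sub_left (Finset.prod_le_prod (fun i _ => frameSetFun_nonneg _ _)
    fun i _ => frameSetFun_mono _ fun j hj => ?_) _
  simp only [Finset.mem_filter, Finset.mem_univ, true_and] at hj ⊢
  exact fun h => hj (Finset.mem_insert_of_mem h)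
end

section
/- Let R ≥ 1 and for each i = 1,…,R let U_i ∈ ℂ^{N_i×K_i} with rows u_{i,1},…,u_{i,N_i}, and let F_i(A) = ∑_{j∈A} ∑_{l∈A} |⟨u_{i,j}, u_{i,l}⟩|² for A ⊆ {1,…,N_i}. Let 𝒩 be the disjoint union of the sets 𝒩_i = {1,…,N_i}, and for S ⊆ 𝒩 write S_i = S ∩ 𝒩_i. Define G(S) = ∏_{i=1}^R F_i(𝒩_i) − ∏_{i=1}^R F_i(𝒩_i ∖ S_i). Then G is submodular: for every S ⊆ 𝒩 and distinct x, y ∈ 𝒩 ∖ S, G(S ∪ {x}) − G(S) ≥ G(S ∪ {x,y}) − G(S ∪ {y}). -/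
open scoped BigOperators

/-- Expansion of the product of frame potentials over tuples of pairs. -/
theorem prod_frame_expand {R : ℕ} {N K : Fin R → ℕ}
    (U : ∀ i, Matrix (Fin (N i)) (Fin (K i)) ℂ)
    (S : Finset (Σ i : Fin R, Fin (N i))) :
    (∏ i, frameSetFun (U i)
      (Finset.univ.filter fun j : Fin (N i) => (⟨i, j⟩ : Σ i, Fin (N i)) ∉ S)) =
    ∑ p : (∀ i, Fin (N i) × Fin (N i)),
      if (∀ i, (⟨i, (p i).1⟩ : Σ i, Fin (N i)) ∉ S ∧ (⟨i, (p i).2⟩ : Σ i, Fin (N i)) ∉ S)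
      then ∏ i, ‖∑ c, star (U i (p i).1 c) * U i (p i).2 c‖ ^ 2 else 0 := by
  have h : ∀ i, frameSetFun (U i)
      (Finset.univ.filter fun j : Fin (N i) => (⟨i, j⟩ : Σ i, Fin (N i)) ∉ S) =
      ∑ q : Fin (N i) × Fin (N i),
        if ((⟨i, q.1⟩ : Σ i, Fin (N i)) ∉ S ∧ (⟨i, q.2⟩ : Σ i, Fin (N i)) ∉ S)
        then ‖∑ c, star (U i q.1 c) * U i q.2 c‖ ^ 2 else 0 := by
    intro i
    unfold frameSetFun
    rw [← Finset.sum_product', ← Finset.filter_product, Finset.sum_filter]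
    rfl
  simp_rw [h]
  rw [Finset.prod_univ_sum, Fintype.piFinset_univ]
  refine Finset.sum_congr rfl fun p _ => ?_
  rw [Finset.prod_ite_zero]
  simp

/-- The supermodularity of a single indicator term. -/
theorem ite_aux (X Y Z : Prop) (W : ℝ) (hW : 0 ≤ W) [Decidable Z] [Decidable (X ∧ Z)]
    [Decidable (Y ∧ X ∧ Z)] [Decidable (Y ∧ Z)] :
    0 ≤ (if Z then W else 0) - (if X ∧ Z then W else 0) + (if Y ∧ X ∧ Z then W else 0)
      - (if Y ∧ Z then W else 0) := by
  by_cases hX : X <;> by_cases hY : Y <;> by_cases hZ : Z <;> simp [hX, hY, hZ, hW]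

/-- `G` is submodular. -/
theorem G_submodular (R : ℕ) (hR : 1 ≤ R) (N K : Fin R → ℕ)
    (U : ∀ i, Matrix (Fin (N i)) (Fin (K i)) ℂ) :
    ∀ (S : Finset (Σ i : Fin R, Fin (N i))) (x y : Σ i : Fin R, Fin (N i)),
      x ∉ S → y ∉ S → x ≠ y →
      G U (insert x S) - G U S ≥
        G U (insert y (insert x S)) - G U (insert y S) := by
  intro S x y _ _ _
  unfold G
  simp only [prod_frame_expand]
  rw [ge_iff_le, ← sub_nonneg]
  have key : ∀ a b c d e : ℝ, (a - b - (a - c)) - (a - d - (a - e)) = c - b + d - e := by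
    intros; ring
  rw [key, ← Finset.sum_sub_distrib, ← Finset.sum_add_distrib, ← Finset.sum_sub_distrib]
  refine Finset.sum_nonneg fun p _ => ?_
  have hW : 0 ≤ ∏ i, ‖∑ c, star (U i (p i).1 c) * U i (p i).2 c‖ ^ 2 :=
    Finset.prod_nonneg fun i _ => by positivity
  generalize (∏ i, ‖∑ c, star (U i (p i).1 c) * U i (p i).2 c‖ ^ 2) = W at hW
  have hins : ∀ (z : Σ i : Fin R, Fin (N i)) (T : Finset (Σ i : Fin R, Fin (N i))),
      (∀ i, (⟨i, (p i).1⟩ : Σ i, Fin (N i)) ∉ insert z T ∧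
        (⟨i, (p i).2⟩ : Σ i, Fin (N i)) ∉ insert z T) ↔
      ((∀ i, (⟨i, (p i).1⟩ : Σ i, Fin (N i)) ≠ z ∧ (⟨i, (p i).2⟩ : Σ i, Fin (N i)) ≠ z) ∧
       (∀ i, (⟨i, (p i).1⟩ : Σ i, Fin (N i)) ∉ T ∧ (⟨i, (p i).2⟩ : Σ i, Fin (N i)) ∉ T)) := by
    intro z T
    rw [← forall_and]
    refine forall_congr' fun i => ?_
    simp only [Finset.mem_insert, not_or]
    tauto
  simp only [hins]
  exact ite_aux _ _ _ W hW
end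

section
/- Let R ≥ 1, and for each i = 1,…,R let U_i ∈ ℂ^{N_i×K_i}, F_i(A) the frame potential of the rows of U_i indexed by A ⊆ {1,…,N_i}, and F(L) = ∏_{i=1}^R F_i(L_i) for a tuple of selections L = (L_1,…,L_R). Let K = ∏_{i=1}^R K_i, let u_m for m ∈ ∏_i {1,…,N_i} denote the rows of the Kronecker product U_1 ⊗ ⋯ ⊗ U_R, and let L_min = min_m ‖u_m‖₂², assumed strictly positive. Suppose L^g = (L_1^g,…,L_R^g) and L^⋆ = (L_1^⋆,…,L_R^⋆) are two tuples of selections with every L_i^g and every L_i^⋆ nonempty, satisfying the guarantee F(𝒩) − F(L^g) ≥ (1/2)(F(𝒩) − F(L^⋆)), where F(𝒩) = ∏_{i=1}^R F_i({1,…,N_i}). Then F(L^g) ≤ γ F(L^⋆) with γ = (1/2)((K/L_min²) F(𝒩) + 1). -/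
open scoped BigOperators

/-- Near-optimality with respect to the frame potential (dense core case):
if the tuples of nonempty selections `L^g` and `L^⋆` satisfy the near-optimality
guarantee `F(𝒩) − F(L^g) ≥ (1/2)(F(𝒩) − F(L^⋆))`, then
`F(L^g) ≤ γ F(L^⋆)` with `γ = (1/2)((K/L_min²) F(𝒩) + 1)`, where
`K = ∏ i K_i` and `L_min` is the minimum squared row norm of the Kronecker
product `U_1 ⊗ ⋯ ⊗ U_R`. -/
theorem frame_potential_near_optimality_dense (R : ℕ) (hR : 1 ≤ R)
    (N K : Fin R → ℕ)
    (U : ∀ i, Matrix (Fin (N i)) (Fin (K i)) ℂ)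
    (Lg Lstar : ∀ i, Finset (Fin (N i)))
    (hg : ∀ i, (Lg i).Nonempty) (hstar : ∀ i, (Lstar i).Nonempty)
    (Lmin : ℝ) (hpos : 0 < Lmin)
    (hLmin : IsLeast {x : ℝ | ∃ m : ∀ i, Fin (N i),
      x = ∑ k : ∀ i, Fin (K i), ‖∏ i, U i (m i) (k i)‖ ^ 2} Lmin)
    (hguarantee :
      (∏ i, frameSetFun (U i) Finset.univ) - (∏ i, frameSetFun (U i) (Lg i)) ≥
        (1 / 2) * ((∏ i, frameSetFun (U i) Finset.univ) -
          ∏ i, frameSetFun (U i) (Lstar i))) :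
    (∏ i, frameSetFun (U i) (Lg i)) ≤
      (1 / 2) * (((∏ i, (K i : ℝ)) / Lmin ^ 2) *
          (∏ i, frameSetFun (U i) Finset.univ) + 1) *
        ∏ i, frameSetFun (U i) (Lstar i) := by
  choose m hm using hstar
  have hmem : Lmin ≤ ∑ k : ∀ i, Fin (K i), ‖∏ i, U i (m i) (k i)‖ ^ 2 :=
    hLmin.2 ⟨m, rfl⟩
  have hprod : ∑ k : ∀ i, Fin (K i), ‖∏ i, U i (m i) (k i)‖ ^ 2
      = ∏ i, ∑ c, ‖U i (m i) c‖ ^ 2 := by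
    rw [Fintype.prod_sum]
    refine Finset.sum_congr rfl fun k _ => ?_
    rw [norm_prod, Finset.prod_pow]
  rw [hprod] at hmem
  have hrow : ∀ i, (∑ c, ‖U i (m i) c‖ ^ 2) ^ 2 ≤ frameSetFun (U i) (Lstar i) := by
    intro i
    have e : (∑ c, ‖U i (m i) c‖ ^ 2) ^ 2
        = ‖∑ c, star (U i (m i) c) * U i (m i) c‖ ^ 2 := by
      have h1 : ∑ c, star (U i (m i) c) * U i (m i) c
          = ((∑ c, ‖U i (m i) c‖ ^ 2 : ℝ) : ℂ) := by
        push_cast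
        refine Finset.sum_congr rfl fun c _ => ?_
        exact Complex.conj_mul' _
      rw [h1, Complex.norm_real, Real.norm_eq_abs, sq_abs]
    rw [e]
    unfold frameSetFun
    refine le_trans ?_ (Finset.single_le_sum
      (f := fun j => ∑ l ∈ Lstar i, ‖∑ c, star (U i j c) * U i l c‖ ^ 2)
      (fun j _ => Finset.sum_nonneg fun l _ => sq_nonneg _) (hm i))
    exact Finset.single_le_sum
      (f := fun l => ‖∑ c, star (U i (m i) c) * U i l c‖ ^ 2)
      (fun l _ => sq_nonneg _) (hm i)
  have hS : Lmin ^ 2 ≤ ∏ i, frameSetFun (U i) (Lstar i) := by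
    calc Lmin ^ 2 ≤ (∏ i, ∑ c, ‖U i (m i) c‖ ^ 2) ^ 2 :=
          pow_le_pow_left₀ hpos.le hmem 2
      _ = ∏ i, (∑ c, ‖U i (m i) c‖ ^ 2) ^ 2 := (Finset.prod_pow _ _ _).symm
      _ ≤ _ := Finset.prod_le_prod (fun i _ => sq_nonneg _) fun i _ => hrow i
  have hK : (1 : ℝ) ≤ ∏ i, (K i : ℝ) := by
    have hne : ∏ i, K i ≠ 0 := by
      intro h0
      obtain ⟨i, _, hi⟩ := Finset.prod_eq_zero_iff.1 h0
      have hz : ∏ i, ∑ c, ‖U i (m i) c‖ ^ 2 = 0 := by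
        refine Finset.prod_eq_zero (Finset.mem_univ i) ?_
        haveI : IsEmpty (Fin (K i)) := by rw [hi]; infer_instance
        exact Finset.sum_eq_zero fun c _ => isEmptyElim c
      linarith
    exact_mod_cast Nat.one_le_iff_ne_zero.2 hne
  have hN : 0 ≤ ∏ i, frameSetFun (U i) Finset.univ :=
    Finset.prod_nonneg fun i _ => Finset.sum_nonneg fun j _ =>
      Finset.sum_nonneg fun l _ => sq_nonneg _
  generalize (∏ i, frameSetFun (U i) Finset.univ) = T at *
  generalize (∏ i, frameSetFun (U i) (Lstar i)) = S at *
  generalize (∏ i, (K i : ℝ)) = κ at *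
  have hL2 : 0 < Lmin ^ 2 := by positivity
  have h1 : 1 ≤ κ / Lmin ^ 2 * S := by
    rw [div_mul_eq_mul_div, le_div_iff₀ hL2]
    nlinarith
  have h2 : T ≤ κ / Lmin ^ 2 * S * T := le_mul_of_one_le_left hN h1
  nlinarith
end
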